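/- Suppose the Aretakis quantity vanishes, i.e. ∂_rΦ(v,m) + Φ(v,m)/m = 0 for all v (as holds for solutions evolving from data of compact support on a Cauchy slice of the exterior), and suppose there exist constants C > 0 and v₁ > 0 such that |Φ(v,m)| ≤ C·v^{−3/5} for all v ≥ v₁. Then there exists a constant C' > 0 such that |∂²_rΦ(v,m)| ≤ C'·v^{2/5} for all v ≥ v₁. In particular the second transverse derivative at the horizon grows at most like v^{2/5}, strictly slower than the linear growth occurring when the Aretakis quantity is nonzero. -/

import Mathlib

/-!
At `r = m` the wave equation itself says that the Aretakis quantity `H₀ = ∂_rΦ + Φ / m` is conserved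
along the horizon. The coefficients `((r - m) / r)²` and `(r - m) / r²` have a double and a simple
zero at `r = m`, so the `r`-derivative of the equation involves no more than two transverse
derivatives there: it is the transport equation `∂_v (∂_r²Φ + ∂_rΦ / m - Φ / m²) = -∂_rΦ / m²`.
Eliminating `∂_rΦ = H₀ - Φ / m` turns it into
`∂_v (∂_r²Φ + (H₀ / m²) v - 2 Φ / m²) = Φ / m³`,
and integrating the decay of `Φ` gives `∂_r²Φ = -(H₀ / m²) v + O(v^{p + 1})` when `Φ = O(v^p)`
with `p > -1`. The theorem is the case `H₀ = 0`, `p = -3/5`.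
-/

open Asymptotics Filter Function Set Topology

section PartialDerivatives

variable {𝕜 E : Type*} [NontriviallyNormedField 𝕜] [NormedAddCommGroup E] [NormedSpace 𝕜 E]
  {Φ : 𝕜 → 𝕜 → E} {n : WithTop ℕ∞}

/-- The partial derivative of a curried function of two variables in its first variable, which is
the advanced time `v` for a field `Φ v r`. -/
noncomputable def derivFst (Φ : 𝕜 → 𝕜 → E) (x y : 𝕜) : E := deriv (fun x' => Φ x' y) x

/-- The partial derivative of a curried function of two variables in its second variable, which is
the radius `r` for a field `Φ v r`. -/
noncomputable def derivSnd (Φ : 𝕜 → 𝕜 → E) (x y : 𝕜) : E := deriv (Φ x) y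

lemma hasDerivAt_fst_fderiv {x y : 𝕜} (hΦ : DifferentiableAt 𝕜 (uncurry Φ) (x, y)) :
    HasDerivAt (fun x' => Φ x' y) (fderiv 𝕜 (uncurry Φ) (x, y) (1, 0)) x :=
  hΦ.hasFDerivAt.comp_hasDerivAt (f := fun x' => (x', y)) x
    ((hasDerivAt_id x).prodMk (hasDerivAt_const x y))

lemma hasDerivAt_snd_fderiv {x y : 𝕜} (hΦ : DifferentiableAt 𝕜 (uncurry Φ) (x, y)) :
    HasDerivAt (Φ x) (fderiv 𝕜 (uncurry Φ) (x, y) (0, 1)) y :=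
  hΦ.hasFDerivAt.comp_hasDerivAt y ((hasDerivAt_const y x).prodMk (hasDerivAt_id y))

lemma hasDerivAt_derivFst {x y : 𝕜} (hΦ : DifferentiableAt 𝕜 (uncurry Φ) (x, y)) :
    HasDerivAt (fun x' => Φ x' y) (derivFst Φ x y) x :=
  (hasDerivAt_fst_fderiv hΦ).differentiableAt.hasDerivAt

lemma hasDerivAt_derivSnd {x y : 𝕜} (hΦ : DifferentiableAt 𝕜 (uncurry Φ) (x, y)) :
    HasDerivAt (Φ x) (derivSnd Φ x y) y :=
  (hasDerivAt_snd_fderiv hΦ).differentiableAt.hasDerivAt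

lemma uncurry_derivFst (hΦ : Differentiable 𝕜 (uncurry Φ)) :
    uncurry (derivFst Φ) = fun p => fderiv 𝕜 (uncurry Φ) p (1, 0) :=
  funext fun p => (hasDerivAt_fst_fderiv (hΦ p)).deriv

lemma uncurry_derivSnd (hΦ : Differentiable 𝕜 (uncurry Φ)) :
    uncurry (derivSnd Φ) = fun p => fderiv 𝕜 (uncurry Φ) p (0, 1) :=
  funext fun p => (hasDerivAt_snd_fderiv (hΦ p)).deriv

lemma contDiff_derivFst (hΦ : ContDiff 𝕜 (n + 1) (uncurry Φ)) :
    ContDiff 𝕜 n (uncurry (derivFst Φ)) := by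
  rw [uncurry_derivFst (hΦ.differentiable (by simp))]
  exact (hΦ.fderiv_right le_rfl).clm_apply contDiff_const

lemma contDiff_derivSnd (hΦ : ContDiff 𝕜 (n + 1) (uncurry Φ)) :
    ContDiff 𝕜 n (uncurry (derivSnd Φ)) := by
  rw [uncurry_derivSnd (hΦ.differentiable (by simp))]
  exact (hΦ.fderiv_right le_rfl).clm_apply contDiff_const

lemma derivSnd_derivFst (hΦ : ContDiff 𝕜 n (uncurry Φ)) (hn : minSmoothness 𝕜 2 ≤ n) (x y : 𝕜) :
    derivSnd (derivFst Φ) x y = derivFst (derivSnd Φ) x y := by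
  have h_two : ContDiff 𝕜 (1 + 1) (uncurry Φ) :=
    hΦ.of_le ((one_add_one_eq_two (R := WithTop ℕ∞)).trans_le (le_minSmoothness.trans hn))
  have h_diff : Differentiable 𝕜 (uncurry Φ) := h_two.differentiable (by simp)
  have h_fderiv : DifferentiableAt 𝕜 (fderiv 𝕜 (uncurry Φ)) (x, y) :=
    (h_two.fderiv_right le_rfl).differentiable one_ne_zero (x, y)
  have h_symm : IsSymmSndFDerivAt 𝕜 (uncurry Φ) (x, y) := hΦ.contDiffAt.isSymmSndFDerivAt hn
  have h_snd_fst := hasDerivAt_snd_fderiv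
    ((contDiff_derivFst h_two).differentiable one_ne_zero (x, y))
  have h_fst_snd := hasDerivAt_fst_fderiv
    ((contDiff_derivSnd h_two).differentiable one_ne_zero (x, y))
  rw [uncurry_derivFst h_diff, fderiv_clm_apply h_fderiv (differentiableAt_const _)] at h_snd_fst
  rw [uncurry_derivSnd h_diff, fderiv_clm_apply h_fderiv (differentiableAt_const _)] at h_fst_snd
  calc derivSnd (derivFst Φ) x y = fderiv 𝕜 (fderiv 𝕜 (uncurry Φ)) (x, y) (0, 1) (1, 0) :=
        h_snd_fst.deriv.trans (by simp)
    _ = fderiv 𝕜 (fderiv 𝕜 (uncurry Φ)) (x, y) (1, 0) (0, 1) := h_symm (0, 1) (1, 0)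
    _ = derivFst (derivSnd Φ) x y := (h_fst_snd.deriv.trans (by simp)).symm

end PartialDerivatives

section PowerGrowth

variable {E : Type*} [NormedAddCommGroup E]

lemma isBigO_rpow_rpow_principal_Ici {a p q : ℝ} (ha : 0 < a) (hpq : p ≤ q) :
    (fun x : ℝ => x ^ p) =O[𝓟 (Ici a)] fun x => x ^ q := by
  refine isBigO_principal.2 ⟨a ^ (p - q), fun x hx => ?_⟩
  have hx_pos : 0 < x := ha.trans_le hx
  rw [Real.norm_of_nonneg (Real.rpow_nonneg hx_pos.le p),
    Real.norm_of_nonneg (Real.rpow_nonneg hx_pos.le q)]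
  calc x ^ p = x ^ (p - q) * x ^ q := by rw [← Real.rpow_add hx_pos, sub_add_cancel]
    _ ≤ a ^ (p - q) * x ^ q := by
      gcongr ?_ * _
      exact Real.rpow_le_rpow_of_nonpos ha hx (sub_nonpos.2 hpq)

lemma isBigO_const_rpow_principal_Ici (c : E) {a p : ℝ} (ha : 0 < a) (hp : 0 ≤ p) :
    (fun _ : ℝ => c) =O[𝓟 (Ici a)] fun x : ℝ => x ^ p :=
  (isBigO_const_const c one_ne_zero _).trans
    (by simpa using isBigO_rpow_rpow_principal_Ici ha hp)

variable [NormedSpace ℝ E] {f f' : ℝ → E} {a p : ℝ}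

lemma norm_sub_le_of_norm_hasDerivAt_le_rpow {b K : ℝ} (ha : 0 < a) (hab : a ≤ b) (hp : p ≠ -1)
    (hf : ∀ x ∈ Icc a b, HasDerivAt f (f' x) x) (hf' : ∀ x ∈ Icc a b, ‖f' x‖ ≤ K * x ^ p) :
    ‖f b - f a‖ ≤ K * ((b ^ (p + 1) - a ^ (p + 1)) / (p + 1)) := by
  have zero_notMem : (0 : ℝ) ∉ uIcc a b := notMem_uIcc_of_lt ha (ha.trans_le hab)
  calc ‖f b - f a‖ ≤ ∫ x in a..b, K * x ^ p :=
        norm_sub_le_integral_of_norm_deriv_le_of_le hab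
          (fun x hx => (hf x hx).continuousAt.continuousWithinAt)
          (fun x hx => (hf x (Ioo_subset_Icc_self hx)).differentiableAt.differentiableWithinAt)
          (.of_forall fun x hx => by
            have hx' := Ioo_subset_Icc_self hx
            exact (hf x hx').deriv ▸ hf' x hx')
          ((intervalIntegral.intervalIntegrable_rpow (.inr zero_notMem)).const_mul K)
    _ = K * ((b ^ (p + 1) - a ^ (p + 1)) / (p + 1)) := by
        rw [intervalIntegral.integral_const_mul, integral_rpow (.inr ⟨hp, zero_notMem⟩)]

lemma isBigO_rpow_add_one_of_hasDerivAt (ha : 0 < a) (hp : -1 < p)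
    (hf : ∀ x ∈ Ici a, HasDerivAt f (f' x) x) (hf' : f' =O[𝓟 (Ici a)] fun x => x ^ p) :
    f =O[𝓟 (Ici a)] fun x => x ^ (p + 1) := by
  have hp' : 0 < p + 1 := by linarith
  obtain ⟨K, hK, hK_bound⟩ := hf'.exists_nonneg
  have h_increment : (fun x => f x - f a) =O[𝓟 (Ici a)] fun x => x ^ (p + 1) := by
    refine isBigO_principal.2 ⟨K / (p + 1), fun b hb => ?_⟩
    have hb_nonneg : 0 ≤ b := ha.le.trans hb
    have h_bound : ∀ x ∈ Icc a b, ‖f' x‖ ≤ K * x ^ p := fun x hx => by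
      simpa [abs_of_nonneg (Real.rpow_nonneg (ha.le.trans hx.1) p)]
        using isBigOWith_principal.1 hK_bound x hx.1
    calc ‖f b - f a‖ ≤ K * ((b ^ (p + 1) - a ^ (p + 1)) / (p + 1)) :=
          norm_sub_le_of_norm_hasDerivAt_le_rpow ha hb hp.ne' (fun x hx => hf x hx.1) h_bound
      _ ≤ K * (b ^ (p + 1) / (p + 1)) := by
          gcongr
          exact sub_le_self _ (Real.rpow_nonneg ha.le _)
      _ = K / (p + 1) * ‖b ^ (p + 1)‖ := by
          rw [Real.norm_of_nonneg (Real.rpow_nonneg hb_nonneg _)]; ring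
  simpa using h_increment.add (isBigO_const_rpow_principal_Ici (f a) ha hp'.le)

end PowerGrowth

section Horizon

variable {m : ℝ} {Φ : ℝ → ℝ → ℝ}

/-- The left-hand side of the spherically symmetric wave equation on the extreme
Reissner–Nordström black hole of mass `m`, for a field `Φ v r` in ingoing Eddington–Finkelstein
coordinates. -/
noncomputable def waveOperator (m : ℝ) (Φ : ℝ → ℝ → ℝ) (v r : ℝ) : ℝ :=
  ((r - m) / r) ^ 2 * derivSnd (derivSnd Φ) v r + 2 * ((r - m) / r ^ 2) * derivSnd Φ v r
    + 2 * derivFst (derivSnd Φ) v r + (2 / r) * derivFst Φ v r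

/-- The Aretakis quantity `H₀(v)` of a field `Φ v r`, conserved along the horizon `r = m`. -/
noncomputable def aretakisQuantity (m : ℝ) (Φ : ℝ → ℝ → ℝ) (v : ℝ) : ℝ :=
  derivSnd Φ v m + Φ v m / m

lemma hasDerivAt_aretakisQuantity (hΦ : ContDiff ℝ 2 (uncurry Φ)) (v : ℝ) :
    HasDerivAt (aretakisQuantity m Φ) (waveOperator m Φ v m / 2) v := by
  have hΦ_r : ContDiff ℝ 1 (uncurry (derivSnd Φ)) := contDiff_derivSnd hΦ
  refine ((hasDerivAt_derivFst (hΦ_r.differentiable one_ne_zero (v, m))).add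
    ((hasDerivAt_derivFst (hΦ.differentiable two_ne_zero (v, m))).div_const m)).congr_deriv ?_
  simp only [waveOperator, sub_self, zero_div]
  ring

lemma aretakisQuantity_eq (hΦ : ContDiff ℝ 2 (uncurry Φ))
    (hwave : ∀ v, waveOperator m Φ v m = 0) (v w : ℝ) :
    aretakisQuantity m Φ v = aretakisQuantity m Φ w :=
  is_const_of_deriv_eq_zero (fun v => (hasDerivAt_aretakisQuantity hΦ v).differentiableAt)
    (fun v => by rw [(hasDerivAt_aretakisQuantity hΦ v).deriv, hwave v, zero_div]) v w

lemma hasDerivAt_waveOperator_horizon (hm : m ≠ 0) (hΦ : ContDiff ℝ 3 (uncurry Φ)) (v : ℝ) :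
    HasDerivAt (waveOperator m Φ v)
      (2 * (derivFst (derivSnd (derivSnd Φ)) v m + derivFst (derivSnd Φ) v m / m
        - derivFst Φ v m / m ^ 2 + derivSnd Φ v m / m ^ 2)) m := by
  have hΦ_r : ContDiff ℝ 2 (uncurry (derivSnd Φ)) := contDiff_derivSnd hΦ
  have hΦ_v : ContDiff ℝ 2 (uncurry (derivFst Φ)) := contDiff_derivFst hΦ
  have hΦ_rr : ContDiff ℝ 1 (uncurry (derivSnd (derivSnd Φ))) := contDiff_derivSnd hΦ_r
  have hΦ_rv : ContDiff ℝ 1 (uncurry (derivFst (derivSnd Φ))) := contDiff_derivFst hΦ_r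
  have h_sub : HasDerivAt (fun r : ℝ => r - m) 1 m := (hasDerivAt_id m).sub_const m
  have h_double_zero : HasDerivAt (fun r : ℝ => ((r - m) / r) ^ 2) 0 m := by
    simpa using (h_sub.fun_div (hasDerivAt_id' m) hm).fun_pow 2
  have h_simple_zero : HasDerivAt (fun r : ℝ => 2 * ((r - m) / r ^ 2)) (2 / m ^ 2) m :=
    ((h_sub.fun_div (hasDerivAt_pow 2 m) (pow_ne_zero 2 hm)).const_mul 2).congr_deriv
      (by field_simp; ring)
  have h_two_div : HasDerivAt (fun r : ℝ => 2 / r) (-2 / m ^ 2) m := by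
    simpa using (hasDerivAt_const m (2 : ℝ)).fun_div (hasDerivAt_id' m) hm
  have h_rr := h_double_zero.mul (hasDerivAt_derivSnd (hΦ_rr.differentiable one_ne_zero (v, m)))
  have h_r := h_simple_zero.mul (hasDerivAt_derivSnd (hΦ_r.differentiable two_ne_zero (v, m)))
  have h_rv := (hasDerivAt_derivSnd (hΦ_rv.differentiable one_ne_zero (v, m))).const_mul 2
  have h_v := h_two_div.mul (hasDerivAt_derivSnd (hΦ_v.differentiable two_ne_zero (v, m)))
  refine (((h_rr.add h_r).add h_rv).add h_v).congr_deriv ?_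
  rw [derivSnd_derivFst hΦ (by norm_num), derivSnd_derivFst hΦ_r (by simp), sub_self]
  ring

lemma hasDerivAt_horizon_transport (hm : m ≠ 0) (hΦ : ContDiff ℝ 3 (uncurry Φ)) {v : ℝ}
    (hwave : waveOperator m Φ v =ᶠ[𝓝 m] 0) :
    HasDerivAt
      (fun w => derivSnd (derivSnd Φ) w m + derivSnd Φ w m / m - Φ w m / m ^ 2)
      (-(derivSnd Φ v m / m ^ 2)) v := by
  have hΦ_r : ContDiff ℝ 2 (uncurry (derivSnd Φ)) := contDiff_derivSnd hΦ
  have hΦ_rr : ContDiff ℝ 1 (uncurry (derivSnd (derivSnd Φ))) := contDiff_derivSnd hΦ_r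
  have h_r_wave := (hasDerivAt_waveOperator_horizon hm hΦ v).unique
    ((hasDerivAt_const m 0).congr_of_eventuallyEq hwave)
  have h_rr := hasDerivAt_derivFst (hΦ_rr.differentiable one_ne_zero (v, m))
  have h_r := hasDerivAt_derivFst (hΦ_r.differentiable two_ne_zero (v, m))
  have h_field := hasDerivAt_derivFst (hΦ.differentiable three_ne_zero (v, m))
  refine ((h_rr.add (h_r.div_const m)).sub (h_field.div_const (m ^ 2))).congr_deriv ?_
  linarith

lemma hasDerivAt_horizon_transport_of_aretakisQuantity (hm : m ≠ 0)
    (hΦ : ContDiff ℝ 3 (uncurry Φ)) (hwave : ∀ v, waveOperator m Φ v =ᶠ[𝓝 m] 0) (v : ℝ) :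
    HasDerivAt
      (fun w => derivSnd (derivSnd Φ) w m + aretakisQuantity m Φ w / m ^ 2 * w
        - 2 / m ^ 2 * Φ w m)
      (1 / m ^ 3 * Φ v m) v := by
  have h_conserved (w : ℝ) : aretakisQuantity m Φ w = aretakisQuantity m Φ v :=
    aretakisQuantity_eq (hΦ.of_le (by norm_num)) (fun v => (hwave v).eq_of_nhds) w v
  have h_r (w : ℝ) : derivSnd Φ w m = aretakisQuantity m Φ v - Φ w m / m := by
    rw [← h_conserved w, aretakisQuantity, add_sub_cancel_right]
  have h_linear : HasDerivAt
      (fun w => aretakisQuantity m Φ v / m ^ 2 * w - aretakisQuantity m Φ v / m)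
      (aretakisQuantity m Φ v / m ^ 2) v := by
    simpa using ((hasDerivAt_id v).const_mul (aretakisQuantity m Φ v / m ^ 2)).sub_const
      (aretakisQuantity m Φ v / m)
  have h_transport := (hasDerivAt_horizon_transport hm hΦ (hwave v)).add h_linear
  refine (h_transport.congr_deriv ?_).congr_of_eventuallyEq (.of_forall fun w => ?_)
  · rw [h_r]
    field_simp
    ring
  · simp only [Pi.add_apply, h_conserved w, h_r w]
    field_simp
    ring

lemma isBigO_derivSnd_derivSnd_horizon (hm : m ≠ 0) (hΦ : ContDiff ℝ 3 (uncurry Φ))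
    (hwave : ∀ v, waveOperator m Φ v =ᶠ[𝓝 m] 0) {v₁ p : ℝ} (hv₁ : 0 < v₁) (hp : -1 < p)
    (hdecay : (fun v => Φ v m) =O[𝓟 (Ici v₁)] fun v => v ^ p) :
    (fun v => derivSnd (derivSnd Φ) v m + aretakisQuantity m Φ v / m ^ 2 * v)
      =O[𝓟 (Ici v₁)] fun v => v ^ (p + 1) := by
  have h_transported := isBigO_rpow_add_one_of_hasDerivAt hv₁ hp
    (fun v _ => hasDerivAt_horizon_transport_of_aretakisQuantity hm hΦ hwave v)
    (hdecay.const_mul_left (1 / m ^ 3))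
  have h_field : (fun v => 2 / m ^ 2 * Φ v m) =O[𝓟 (Ici v₁)] fun v => v ^ (p + 1) :=
    (hdecay.trans (isBigO_rpow_rpow_principal_Ici hv₁ (by linarith))).const_mul_left _
  simpa only [sub_add_cancel] using h_transported.add h_field

end Horizon

theorem second_transverse_derivative_milder_growth_general {m : ℝ} (hm : m ≠ 0)
    {Φ : ℝ → ℝ → ℝ} (hΦ : ContDiff ℝ 3 (uncurry Φ))
    (hwave : ∀ v, waveOperator m Φ v =ᶠ[𝓝 m] 0) {C v₁ p : ℝ} (hv₁ : 0 < v₁)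
    (hp : -1 < p) (hdecay : ∀ v, v₁ ≤ v → |Φ v m| ≤ C * v ^ p) :
    ∃ C', 0 < C' ∧ ∀ v, v₁ ≤ v →
      |deriv (deriv (Φ v)) m + aretakisQuantity m Φ v / m ^ 2 * v| ≤ C' * v ^ (p + 1) := by
  have h_norm_rpow {v : ℝ} (hv : v₁ ≤ v) (q : ℝ) : ‖v ^ q‖ = v ^ q :=
    Real.norm_of_nonneg (Real.rpow_nonneg (hv₁.le.trans hv) q)
  have hdecay' : (fun v => Φ v m) =O[𝓟 (Ici v₁)] fun v => v ^ p :=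
    isBigO_principal.2 ⟨C, fun v hv => (h_norm_rpow hv p).symm ▸ hdecay v hv⟩
  obtain ⟨C', hC', h_growth⟩ :=
    (isBigO_derivSnd_derivSnd_horizon hm hΦ hwave hv₁ hp hdecay').exists_pos
  exact ⟨C', hC', fun v hv => h_norm_rpow hv (p + 1) ▸ isBigOWith_principal.1 h_growth v hv⟩

/-- Milder growth of the second transverse derivative at the horizon for fields with
vanishing Aretakis quantity (as holds for compact-data solutions): if
`∂_rΦ(v,m) + Φ(v,m)/m = 0` for all `v` and `|Φ(v,m)| ≤ C·v^{-3/5}` for `v ≥ v₁`,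
then there is `C' > 0` with `|∂²_rΦ(v,m)| ≤ C'·v^{2/5}` for all `v ≥ v₁`. -/
theorem second_transverse_derivative_milder_growth (m : ℝ) (hm : 0 < m)
    (Φ : ℝ → ℝ → ℝ) (hΦ : ContDiff ℝ (⊤ : ℕ∞) (Function.uncurry Φ))
    (hwave : ∀ v r : ℝ, 0 < r →
      ((r - m) / r) ^ 2 * deriv (deriv (Φ v)) r
        + 2 * ((r - m) / r ^ 2) * deriv (Φ v) r
        + 2 * deriv (fun w => deriv (Φ w) r) v
        + (2 / r) * deriv (fun w => Φ w r) v = 0)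
    (hH₀ : ∀ v : ℝ, deriv (Φ v) m + Φ v m / m = 0)
    (C v₁ : ℝ) (hC : 0 < C) (hv₁ : 0 < v₁)
    (hdecay : ∀ v : ℝ, v₁ ≤ v → |Φ v m| ≤ C * v ^ (-(3 : ℝ) / 5)) :
    ∃ C' : ℝ, 0 < C' ∧
      ∀ v : ℝ, v₁ ≤ v → |deriv (deriv (Φ v)) m| ≤ C' * v ^ ((2 : ℝ) / 5) := by
  have h_exponent : -(3 : ℝ) / 5 + 1 = 2 / 5 := by norm_num
  simpa [aretakisQuantity, derivSnd, hH₀, h_exponent] using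
    second_transverse_derivative_milder_growth_general hm.ne'
      (hΦ.of_le (WithTop.coe_le_coe.2 (le_top : (3 : ℕ∞) ≤ ⊤)))
      (fun v => (eventually_gt_nhds hm).mono (hwave v)) hv₁ (by norm_num) hdecay
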